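/- Let F be a bounded standard set-valued map and T > 0. Define Λ : C([0,T], ℝ^m) ⇒ C([0,T], ℝ^m) by: y ∈ Λ(z) iff there is an integrable h : [0,T] → ℝ^m with h(u) ∈ F(z(u)) for all u ∈ [0,T] and y(τ) = z(0) + ∫_0^τ h(u) du for all τ ∈ [0,T]. Then Λ has nonempty images and its graph is closed: if z_n → z and y_n → y uniformly on [0,T] with y_n ∈ Λ(z_n) for all n, then y ∈ Λ(z). -/

import Mathlib

open MeasureTheory Filter Topology Metric Set Pointwise

noncomputable section

/-- `ℝ^m` with the Euclidean norm. -/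
abbrev Euc (m : ℕ) := EuclideanSpace ℝ (Fin m)

/-- A standard set-valued map `F : ℝ^m ⇒ ℝ^m`: nonempty compact convex values,
closed graph, and linear growth. -/
def IsStandardSVM {m : ℕ} (F : Euc m → Set (Euc m)) : Prop :=
  (∀ x, (F x).Nonempty ∧ IsCompact (F x) ∧ Convex ℝ (F x)) ∧
  IsClosed {p : Euc m × Euc m | p.2 ∈ F p.1} ∧
  ∃ c > 0, ∀ x, ∀ z ∈ F x, ‖z‖ ≤ c * (1 + ‖x‖)

/-- A solution of the differential inclusion `dx/dt ∈ F x`: an absolutely continuous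
curve `z : ℝ → ℝ^m` (written as the integral of a locally integrable derivative `h`)
with `h t ∈ F (z t)` for almost every `t`. -/
def IsSolution {m : ℕ} (F : Euc m → Set (Euc m)) (z : ℝ → Euc m) : Prop :=
  Continuous z ∧ ∃ h : ℝ → Euc m,
    (∀ a b : ℝ, IntervalIntegrable h volume a b) ∧
    (∀ᵐ t ∂volume, h t ∈ F (z t)) ∧
    ∀ t : ℝ, z t = z 0 + ∫ u in (0:ℝ)..t, h u

/-- `Φ_t(x)`: the set of points reached at time `t` by solutions starting at `x`. -/
def PhiT {m : ℕ} (F : Euc m → Set (Euc m)) (t : ℝ) (x : Euc m) : Set (Euc m) :=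
  {y | ∃ z : ℝ → Euc m, IsSolution F z ∧ z 0 = x ∧ z t = y}

/-- `ω_Φ(x) = ⋂_{t ≥ 0} closure (Φ_{[t,∞)}(x))`. -/
def omegaLimitSV {m : ℕ} (F : Euc m → Set (Euc m)) (x : Euc m) : Set (Euc m) :=
  ⋂ t ∈ Ici (0:ℝ), closure {y | ∃ s ≥ t, y ∈ PhiT F s x}

/-- An attractor for the set-valued dynamical system induced by `F`: a nonempty,
compact, invariant set admitting a neighborhood `U` with `Φ_t(U) ⊆ N^ε(A)` for all
`t` large enough. -/
def IsAttractorSV {m : ℕ} (F : Euc m → Set (Euc m)) (A : Set (Euc m)) : Prop :=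
  A.Nonempty ∧ IsCompact A ∧
  (∀ x ∈ A, ∃ z : ℝ → Euc m, IsSolution F z ∧ z 0 = x ∧ Set.range z ⊆ A) ∧
  ∃ U : Set (Euc m), IsOpen U ∧ A ⊆ U ∧
    ∀ ε > 0, ∃ tε > 0, ∀ t ≥ tε, ∀ x ∈ U, PhiT F t x ⊆ Metric.thickening ε A

/-- The basin of attraction `B(A) = {x | ω_Φ(x) ⊆ A}`. -/
def basinSV {m : ℕ} (F : Euc m → Set (Euc m)) (A : Set (Euc m)) : Set (Euc m) :=
  {x | omegaLimitSV F x ⊆ A}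

/-- The limit set `L(X) = ⋂_{t ≥ 0} closure {X s : s ≥ t}` of a path. -/
def limitSet {m : ℕ} (X : ℝ → Euc m) : Set (Euc m) :=
  ⋂ t ∈ Ici (0:ℝ), closure {y | ∃ s ≥ t, X s = y}

/-- `inf_{z ∈ S_Φ} sup_{u ∈ [0,T]} ‖z u - Y u‖`. -/
def distToSol {m : ℕ} (F : Euc m → Set (Euc m)) (Y : ℝ → Euc m) (T : ℝ) : ℝ :=
  sInf {d | ∃ z : ℝ → Euc m, IsSolution F z ∧ d = ⨆ u : Icc (0:ℝ) T, ‖z u - Y u‖}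

/-- Asymptotic pseudotrajectory of the set-valued dynamical system induced by `F`. -/
def IsAPT {m : ℕ} (F : Euc m → Set (Euc m)) (X : ℝ → Euc m) : Prop :=
  ∀ T > 0, Tendsto (fun t => distToSol F (fun u => X (t + u)) T) atTop (𝓝 0)

/-- A point `p` is attainable by the process `X`: for every `t > 0` and every
neighborhood `U` of `p`, `P(∃ s ≥ t, X s ∈ U) > 0`. -/
def Attainable {m : ℕ} {Ω : Type*} [MeasurableSpace Ω] (μ : Measure Ω)
    (X : ℝ → Ω → Euc m) (p : Euc m) : Prop :=
  ∀ t > 0, ∀ U ∈ 𝓝 p, 0 < μ {ω | ∃ s ≥ t, X s ω ∈ U}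

/-- `τ_n = γ_1 + ⋯ + γ_n`. -/
def tauOf (γ : ℕ → ℝ) (n : ℕ) : ℝ := ∑ i ∈ Finset.range n, γ (i + 1)

/-- `m(t) = sup {j | τ_j ≤ t}`. -/
def mIdx (γ : ℕ → ℝ) (t : ℝ) : ℕ := sSup {j | tauOf γ j ≤ t}

/-- Hypothesis H1: there is `w t α T` decreasing to `0` in `t` dominating the
conditional probability that `sup_{s ≥ t} inf_{z ∈ S_Φ} sup_{u ∈ [0,T]} ‖z u − X (s+u)‖ ≥ α`. -/
def HypH1 {m : ℕ} {Ω : Type*} [MeasurableSpace Ω] (μ : Measure Ω)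
    (𝓕 : ℝ → MeasurableSpace Ω) (F : Euc m → Set (Euc m)) (X : ℝ → Ω → Euc m) : Prop :=
  ∃ w : ℝ → ℝ → ℝ → ℝ,
    (∀ α > 0, ∀ T > 0, Antitone (fun t => w t α T) ∧ Tendsto (fun t => w t α T) atTop (𝓝 0)) ∧
    ∀ α > 0, ∀ T > 0, ∀ t : ℝ, ∀ᵐ ω ∂μ,
      (μ[Set.indicator {ω' | α ≤ ⨆ s : Ici t, distToSol F (fun u => X ((s : ℝ) + u) ω') T}
          (fun _ => (1:ℝ)) | 𝓕 t]) ω ≤ w t α T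

/-- `F^δ(x) = {y | ∃ z ∈ B(x,δ), dist(y, F z) < δ}`, with the convention `F^0 = F`. -/
def Fdelta {m : ℕ} (F : Euc m → Set (Euc m)) (δ : ℝ) (x : Euc m) : Set (Euc m) :=
  if δ = 0 then F x
  else {y | ∃ z : Euc m, dist z x < δ ∧ Metric.infDist y (F z) < δ}

/-- A `(δ(·), V(·))`-perturbed solution of `dx/dt ∈ F x`. -/
def IsPerturbedSolution {m : ℕ} (F : Euc m → Set (Euc m)) (δ : ℝ → ℝ) (V : ℝ → Euc m)
    (y : ℝ → Euc m) : Prop :=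
  Continuous y ∧ (∀ t > 0, 0 < δ t) ∧ Antitone δ ∧ Tendsto δ atTop (𝓝 0) ∧
  (∀ a b : ℝ, IntervalIntegrable V volume a b) ∧
  (∀ T > 0, Tendsto (fun t => ⨆ u : Icc (0:ℝ) T, ‖∫ r in t..(t + (u : ℝ)), V r‖)
    atTop (𝓝 0)) ∧
  ∃ h : ℝ → Euc m, (∀ a b : ℝ, IntervalIntegrable h volume a b) ∧
    (∀ᵐ t ∂(volume.restrict (Ioi (0:ℝ))), h t - V t ∈ Fdelta F (δ t) (y t)) ∧
    ∀ t ∈ Ici (0:ℝ), y t = y 0 + ∫ u in (0:ℝ)..t, h u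

/-- `Δ(n,T) = sup_{n < k ≤ m(τ_n + T)} ‖∑_{i=n}^{k-1} γ_{i+1} U_{i+1}‖`. -/
def DeltaNT {m : ℕ} {Ω : Type*} (γ : ℕ → ℝ) (U : ℕ → Ω → Euc m) (T : ℝ) (n : ℕ)
    (ω : Ω) : ℝ :=
  ⨆ k : {k : ℕ // n < k ∧ k ≤ mIdx γ (tauOf γ n + T)},
    ‖∑ i ∈ Finset.Ico n (k : ℕ), γ (i + 1) • U (i + 1) ω‖

/-- Condition (bruit2): the conditional probability that `sup_{m ≥ n} Δ(m,T) ≥ ε` is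
dominated by some `w n ε T` decreasing to `0` in `n`. -/
def Bruit2 {m : ℕ} {Ω : Type*} [MeasurableSpace Ω] (μ : Measure Ω)
    (𝓕 : ℕ → MeasurableSpace Ω) (γ : ℕ → ℝ) (U : ℕ → Ω → Euc m) : Prop :=
  ∃ w : ℕ → ℝ → ℝ → ℝ,
    (∀ ε > 0, ∀ T > 0, Antitone (fun n => w n ε T) ∧ Tendsto (fun n => w n ε T) atTop (𝓝 0)) ∧
    ∀ ε > 0, ∀ T > 0, ∀ n : ℕ, ∀ᵐ ω ∂μ,
      (μ[Set.indicator {ω' | ε ≤ ⨆ k : Ici n, DeltaNT γ U T (k : ℕ) ω'}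
          (fun _ => (1:ℝ)) | 𝓕 n]) ω ≤ w n ε T

/-- Topological `limsup` of a sequence of sets: points whose every neighborhood
meets infinitely many of the sets. -/
def setLimsup {X : Type*} [TopologicalSpace X] (A : ℕ → Set X) : Set X :=
  {y | ∀ U ∈ 𝓝 y, {n | (U ∩ A n).Nonempty}.Infinite}

/-- The operator `Λ^δ` on continuous paths `[0,T] → ℝ^m` (with `Λ^0 = Λ`). -/
def LambdaD {m : ℕ} (F : Euc m → Set (Euc m)) (T : ℝ) (hT : 0 ≤ T) (δ : ℝ)
    (z : C(Icc (0:ℝ) T, Euc m)) : Set C(Icc (0:ℝ) T, Euc m) :=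
  {y | ∃ h : ℝ → Euc m, IntervalIntegrable h volume 0 T ∧
    (∀ u : Icc (0:ℝ) T, h u ∈ Fdelta F δ (z u)) ∧
    ∀ τ : Icc (0:ℝ) T, y τ = z ⟨0, Set.left_mem_Icc.mpr hT⟩ + ∫ u in (0:ℝ)..(τ : ℝ), h u}

/-- `Φ^T(M) = closure (⋃_{s ∈ [0,T]} Φ_s(M))`. -/
def PhiTM {m : ℕ} (F : Euc m → Set (Euc m)) (T : ℝ) (M : Set (Euc m)) : Set (Euc m) :=
  closure (⋃ s ∈ Icc (0:ℝ) T, ⋃ x ∈ M, PhiT F s x)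

/-- `‖F‖ = sup_{x ∈ Φ^T(M)} sup_{y ∈ F x} ‖y‖`. -/
def normF {m : ℕ} (F : Euc m → Set (Euc m)) (T : ℝ) (M : Set (Euc m)) : ℝ :=
  sSup {r | ∃ x ∈ PhiTM F T M, ∃ y ∈ F x, r = ‖y‖}

/-- `K_C`: Lipschitz paths with constant `‖F‖ + C + 1` starting in `M`. -/
def KC {m : ℕ} (F : Euc m → Set (Euc m)) (T : ℝ) (hT : 0 ≤ T) (M : Set (Euc m))
    (C : ℝ) : Set C(Icc (0:ℝ) T, Euc m) :=
  {y | (∀ u v : Icc (0:ℝ) T, ‖y u - y v‖ ≤ (normF F T M + C + 1) * |(u : ℝ) - (v : ℝ)|) ∧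
    y ⟨0, Set.left_mem_Icc.mpr hT⟩ ∈ M}

/-- `S_{[0,T]}`: restrictions to `[0,T]` of solutions starting in `M`. -/
def SolRestrict {m : ℕ} (F : Euc m → Set (Euc m)) (T : ℝ) (M : Set (Euc m)) :
    Set C(Icc (0:ℝ) T, Euc m) :=
  {y | ∃ z : ℝ → Euc m, IsSolution F z ∧ z 0 ∈ M ∧ ∀ u : Icc (0:ℝ) T, y u = z u}

/-- A generalised stochastic approximation process relative to `F`. -/
def IsGSAP {m : ℕ} {Ω : Type*} [MeasurableSpace Ω] (μ : Measure Ω)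
    (F : Euc m → Set (Euc m)) (M : Set (Euc m)) (γ : ℕ → ℝ)
    (Fn : ℕ → Euc m → Set (Euc m)) (U : ℕ → Ω → Euc m) (x : ℕ → Ω → Euc m) : Prop :=
  (∀ n, 0 < γ n) ∧
  Tendsto (fun n => ∑ i ∈ Finset.range n, γ (i + 1)) atTop atTop ∧
  Tendsto γ atTop (𝓝 0) ∧
  (∃ C, ∀ n ω, ‖U n ω‖ ≤ C) ∧
  (∀ n ω, x (n + 1) ω - x n ω - γ (n + 1) • U (n + 1) ω ∈ γ (n + 1) • Fn n (x n ω)) ∧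
  (∀ T > 0, ∀ᵐ ω ∂μ, Tendsto
    (fun n => ⨆ k : {k : ℕ // ∑ i ∈ Finset.Ico n k, γ i ≤ T},
      ‖∑ i ∈ Finset.Ico n (k : ℕ), γ (i + 1) • U (i + 1) ω‖) atTop (𝓝 0)) ∧
  (∀ n ω, x n ω ∈ M) ∧
  (∀ δ > 0, ∃ n₀ : ℕ, ∀ n ≥ n₀, ∀ ω, Fn n (x n ω) ⊆ Fdelta F δ (x n ω))

/-!
A pointwise limit `y` of primitives of `hₙ ∈ F (zₙ ·)` is Lipschitz, because `F` is bounded near the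
compact image of `z = lim zₙ`; hence `y` is differentiable almost everywhere and is the primitive of
its derivative. The slopes of `y` at `u` are limits of averages of `hₙ`, and by upper hemicontinuity
these averages lie in any prescribed closed convex thickening of `F (z u)`, so `y' u ∈ F (z u)`.
This gives the closed graph without extracting weak limits in `L¹`.

Nonemptiness follows from the same limit theorem: along the step functions
`zₙ u = z (⌊(n + 1) u⌋ / (n + 1))` every pointwise choice of a selection is measurable, and the
resulting bounded primitives converge pointwise along an ultrafilter.
-/

section UpperHemicontinuity

lemma upperHemicontinuous_of_isClosed_graph {X Y : Type*} [TopologicalSpace X]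
    [FirstCountableTopology X] [TopologicalSpace Y] [FirstCountableTopology Y] {F : X → Set Y}
    (hgraph : IsClosed {p : X × Y | p.2 ∈ F p.1})
    (hloc : ∀ x, ∃ K, IsCompact K ∧ ∀ᶠ x' in 𝓝 x, F x' ⊆ K) : UpperHemicontinuous F := by
  intro x₀
  obtain ⟨K, hK, hFK⟩ := hloc x₀
  refine UpperHemicontinuousAt.of_sequences hK.isSeqCompact hFK fun x hx y hy y₀ hy₀ ↦ ?_
  exact hgraph.mem_of_tendsto (hx.prodMk_nhds hy₀) (.of_forall hy)

lemma IsStandardSVM.upperHemicontinuous {m : ℕ} {F : Euc m → Set (Euc m)}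
    (hF : IsStandardSVM F) : UpperHemicontinuous F := by
  obtain ⟨-, hgraph, c, hc, hgrowth⟩ := hF
  refine upperHemicontinuous_of_isClosed_graph hgraph fun x ↦
    ⟨closedBall 0 (c * (1 + (‖x‖ + 1))), isCompact_closedBall _ _, ?_⟩
  filter_upwards [continuous_norm.tendsto x |>.eventually_le_const (lt_add_one ‖x‖)] with x' hx'
  intro y hy
  rw [mem_closedBall_zero_iff]
  exact (hgrowth x' y hy).trans (by gcongr)

lemma exists_eventually_nhdsSet_subset_ball {X Y : Type*} [TopologicalSpace X]
    [PseudoMetricSpace Y] {F : X → Set Y} (hF : UpperHemicontinuous F)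
    (hbdd : ∀ x, Bornology.IsBounded (F x)) {K : Set X} (hK : IsCompact K) (c : Y) :
    ∃ R, ∀ᶠ x in 𝓝ˢ K, F x ⊆ ball c R := by
  have hopen (R : ℝ) : IsOpen {x | F x ⊆ ball c R} :=
    upperHemicontinuous_iff_isOpen_preimage_Iic.1 hF _ isOpen_ball
  have hcover : K ⊆ ⋃ R : ℝ, {x | F x ⊆ ball c R} := fun x _ ↦ by
    obtain ⟨R, hR⟩ := (hbdd x).subset_ball c
    exact mem_iUnion.2 ⟨R, hR⟩
  have hmono : Monotone fun R : ℝ ↦ {x | F x ⊆ ball c R} := fun R S hRS x hx ↦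
    Subset.trans hx (ball_subset_ball hRS)
  obtain ⟨R, hR⟩ := hK.elim_directed_cover _ hopen hcover hmono.directed_le
  exact ⟨R, (hopen R).mem_nhdsSet.2 hR⟩

end UpperHemicontinuity

section UniformConvergence

variable {ι α X : Type*} [UniformSpace X] {l : Filter ι} {Z : ι → α → X} {z : α → X} {s : Set α}

lemma eventually_mapsTo_of_tendstoUniformlyOn [TopologicalSpace α]
    (hZ : TendstoUniformlyOn Z z l s) (hz : ContinuousOn z s) (hs : IsCompact s) {U : Set X}
    (hU : U ∈ 𝓝ˢ (z '' s)) : ∀ᶠ i in l, MapsTo (Z i) s U := by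
  obtain ⟨V, hV, hVU⟩ := ((hs.image_of_continuousOn hz).nhdsSet_basis_uniformity
    (uniformity X).basis_sets).mem_iff.1 hU
  filter_upwards [hZ V hV] with i hi t ht
  exact hVU (mem_biUnion (mem_image_of_mem z ht) (hi t ht))

lemma tendsto_prod_of_tendstoUniformlyOn [TopologicalSpace α] (hZ : TendstoUniformlyOn Z z l s)
    {t : α} (hz : ContinuousWithinAt z s t) :
    Tendsto (fun p : ι × α ↦ Z p.1 p.2) (l ×ˢ 𝓝[s] t) (𝓝 (z t)) := by
  have hZfst : TendstoUniformlyOn (fun p : ι × α ↦ Z p.1) z (l ×ˢ 𝓝[s] t) s :=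
    fun V hV ↦ (hZ V hV).prod_inl _
  exact hZfst.tendsto_comp hz tendsto_snd

lemma tendstoUniformlyOn_comp_of_isCompact {β : Type*} [UniformSpace β] {f : β → X}
    (hf : Continuous f) {φ : ι → β → β} (hφ : TendstoUniformly φ id l) {K : Set β}
    (hK : IsCompact K) : TendstoUniformlyOn (fun i ↦ f ∘ φ i) f l K := fun V hV ↦ by
  filter_upwards [hφ _ (hK.uniformContinuousAt_of_continuousAt f
    (fun _ _ ↦ hf.continuousAt) hV)] with i hi t ht
  exact hi t ht

lemma exists_eventually_forall_norm_le {E : Type*} [SeminormedAddCommGroup E] [TopologicalSpace α]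
    {F : X → Set E} (hF : UpperHemicontinuous F) (hbdd : ∀ x, Bornology.IsBounded (F x))
    (hZ : TendstoUniformlyOn Z z l s) (hz : ContinuousOn z s) (hs : IsCompact s) :
    ∃ R, ∀ᶠ i in l, ∀ t ∈ s, ∀ y ∈ F (Z i t), ‖y‖ ≤ R := by
  obtain ⟨R, hR⟩ := exists_eventually_nhdsSet_subset_ball hF hbdd
    (hs.image_of_continuousOn hz) (0 : E)
  refine ⟨R, ?_⟩
  filter_upwards [eventually_mapsTo_of_tendstoUniformlyOn hZ hz hs hR] with i hi t ht y hy
  exact (mem_ball_zero_iff.1 (hi ht hy)).le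

lemma tendstoUniformly_floor_mul_div :
    TendstoUniformly (fun (n : ℕ) (t : ℝ) ↦ (⌊((n : ℝ) + 1) * t⌋ : ℝ) / ((n : ℝ) + 1))
      id atTop := by
  rw [Metric.tendstoUniformly_iff]
  intro ε hε
  filter_upwards [tendsto_one_div_add_atTop_nhds_zero_nat.eventually (gt_mem_nhds hε)] with n hn t
  have hfract : t - (⌊((n : ℝ) + 1) * t⌋ : ℝ) / ((n : ℝ) + 1) =
      Int.fract (((n : ℝ) + 1) * t) / ((n : ℝ) + 1) := by
    rw [Int.fract]
    field_simp
  rw [id, Real.dist_eq, hfract, abs_of_nonneg (by positivity)]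
  refine lt_of_le_of_lt ?_ hn
  gcongr
  exact (Int.fract_lt_one _).le

end UniformConvergence

section Lipschitz

variable {E : Type*} [NormedAddCommGroup E] {f : ℝ → E}

lemma intervalIntegrable_of_forall_norm_le {μ : Measure ℝ} [IsLocallyFiniteMeasure μ] {a b R : ℝ}
    (hf : AEStronglyMeasurable f (μ.restrict (uIoc a b))) (hR : ∀ t ∈ uIoc a b, ‖f t‖ ≤ R) :
    IntervalIntegrable f μ a b := by
  refine (intervalIntegrable_const (c := R)).mono_fun hf ?_
  filter_upwards [ae_restrict_mem measurableSet_uIoc] with t ht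
  exact (hR t ht).trans (le_abs_self R)

variable [NormedSpace ℝ E] {K : NNReal}

lemma intervalIntegrable_deriv_of_lipschitzWith [CompleteSpace E] (hf : LipschitzWith K f)
    (a b : ℝ) : IntervalIntegrable (deriv f) volume a b :=
  intervalIntegrable_of_forall_norm_le (aestronglyMeasurable_deriv _ _)
    fun _ _ ↦ norm_deriv_le_of_lipschitz hf

lemma lipschitzWith_integral_of_forall_norm_le {a : ℝ}
    (hint : ∀ b c, IntervalIntegrable f volume b c) (hK : ∀ t, ‖f t‖ ≤ K) :
    LipschitzWith K fun t ↦ ∫ u in a..t, f u := by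
  refine LipschitzWith.of_dist_le_mul fun b c ↦ ?_
  rw [dist_eq_norm, intervalIntegral.integral_interval_sub_left (hint _ _) (hint _ _), Real.dist_eq]
  exact intervalIntegral.norm_integral_le_of_norm_le_const fun t _ ↦ hK t

lemma integral_deriv_eq_sub_of_lipschitzWith [FiniteDimensional ℝ E] (hf : LipschitzWith K f)
    (a b : ℝ) : ∫ u in a..b, deriv f u = f b - f a := by
  have := FiniteDimensional.complete ℝ E
  have hint := intervalIntegrable_deriv_of_lipschitzWith hf
  have hprim : LipschitzWith K fun t ↦ ∫ u in a..t, deriv f u :=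
    lipschitzWith_integral_of_forall_norm_le hint fun _ ↦ norm_deriv_le_of_lipschitz hf
  obtain ⟨C, hC⟩ := ((hf.sub hprim).lipschitzOnWith
      (s := uIcc a b)).absolutelyContinuousOnInterval.const_of_ae_hasDerivAt_zero <| by
    filter_upwards [hf.ae_differentiableAt_real, (hint a b).ae_hasDerivAt_integral]
      with t hft hprimt ht
    simpa only [sub_self] using hft.hasDerivAt.fun_sub (hprimt ht a left_mem_uIcc)
  have ha : f a = C := by simpa using hC a left_mem_uIcc
  have hb : f b - ∫ u in a..b, deriv f u = C := hC b right_mem_uIcc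
  rw [ha, ← hb, sub_sub_cancel]

end Lipschitz

/-- Integrable selections on `[a, b]` of a time-dependent set-valued map `G`. Membership is
required at every time, not merely almost everywhere. -/
structure IsIntegrableSelectionOn {E : Type*} [NormedAddCommGroup E] (G : ℝ → Set E) (a b : ℝ)
    (h : ℝ → E) : Prop where
  intervalIntegrable : IntervalIntegrable h volume a b
  mem : ∀ u ∈ Icc a b, h u ∈ G u

section Selection

variable {E : Type*} [NormedAddCommGroup E] {a b : ℝ}

lemma exists_isIntegrableSelectionOn_of_ae_mem {G : ℝ → Set E}
    (hG : ∀ u ∈ Icc a b, (G u).Nonempty) {h : ℝ → E} (hh : IntervalIntegrable h volume a b)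
    (hmem : ∀ᵐ u ∂volume.restrict (uIoc a b), h u ∈ G u) :
    ∃ k, IsIntegrableSelectionOn G a b k ∧ h =ᵐ[volume.restrict (uIoc a b)] k := by
  classical
  choose! σ hσ using hG
  let k : ℝ → E := fun u ↦ if h u ∈ G u then h u else σ u
  have hk : h =ᵐ[volume.restrict (uIoc a b)] k := by
    filter_upwards [hmem] with u hu
    exact (if_pos hu).symm
  refine ⟨k, ⟨hh.congr_ae hk, fun u hu ↦ ?_⟩, hk⟩
  by_cases hhu : h u ∈ G u
  · simpa only [k, if_pos hhu]
  · simpa only [k, if_neg hhu] using hσ u hu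

variable [NormedSpace ℝ E]

lemma inv_smul_integral_mem_of_convex [CompleteSpace E] {C : Set E} (hC : Convex ℝ C)
    (hclosed : IsClosed C) {u v : ℝ} (huv : u < v) {h : ℝ → E}
    (hh : IntervalIntegrable h volume u v) (hmem : ∀ s ∈ Ioc u v, h s ∈ C) :
    (v - u)⁻¹ • ∫ s in u..v, h s ∈ C := by
  rw [← interval_average_eq, uIoc_of_le huv.le]
  exact hC.set_average_mem hclosed (by simp [huv]) (by simp)
    (ae_restrict_of_forall_mem measurableSet_Ioc hmem) hh.1

variable {ι : Type*} {l : Filter ι} {H : ι → ℝ → E} {y : ℝ → E}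

lemma tendsto_integral_sub_of_tendsto_integral
    (hH : ∀ᶠ i in l, IntervalIntegrable (H i) volume a b)
    (hy : ∀ τ ∈ Icc a b, Tendsto (fun i ↦ ∫ u in a..τ, H i u) l (𝓝 (y τ)))
    {u v : ℝ} (hu : u ∈ Icc a b) (hv : v ∈ Icc a b) :
    Tendsto (fun i ↦ ∫ s in u..v, H i s) l (𝓝 (y v - y u)) := by
  refine ((hy v hv).sub (hy u hu)).congr' ?_
  filter_upwards [hH] with i hi
  have hsub {w : ℝ} (hw : w ∈ Icc a b) : IntervalIntegrable (H i) volume a w :=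
    hi.mono_set (uIcc_subset_uIcc_left (Icc_subset_uIcc hw))
  exact intervalIntegral.integral_interval_sub_left (hsub hv) (hsub hu)

lemma lipschitzOnWith_of_tendsto_integral [l.NeBot] {R : NNReal}
    (hH : ∀ᶠ i in l, IntervalIntegrable (H i) volume a b)
    (hR : ∀ᶠ i in l, ∀ u ∈ Icc a b, ‖H i u‖ ≤ R)
    (hy : ∀ τ ∈ Icc a b, Tendsto (fun i ↦ ∫ u in a..τ, H i u) l (𝓝 (y τ))) :
    LipschitzOnWith R y (Icc a b) := by
  refine LipschitzOnWith.of_dist_le_mul fun v hv u hu ↦ ?_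
  rw [dist_eq_norm, Real.dist_eq]
  refine le_of_tendsto (tendsto_integral_sub_of_tendsto_integral hH hy hu hv).norm ?_
  filter_upwards [hR] with i hi
  exact intervalIntegral.norm_integral_le_of_norm_le_const fun s hs ↦
    hi s (uIcc_subset_Icc hu hv (uIoc_subset_uIcc hs))

variable {X : Type*} [UniformSpace X] {F : X → Set E} {z : ℝ → X} {Z : ι → ℝ → X}

lemma mem_of_hasDerivWithinAt_of_tendsto_integral [CompleteSpace E] [l.NeBot] {u : ℝ}
    (hu : u ∈ Ico a b) (hF : UpperHemicontinuousAt F (z u)) (hclosed : IsClosed (F (z u)))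
    (hconv : Convex ℝ (F (z u))) (hz : ContinuousWithinAt z (Icc a b) u)
    (hZ : TendstoUniformlyOn Z z l (Icc a b))
    (hH : ∀ᶠ i in l, IsIntegrableSelectionOn (fun t ↦ F (Z i t)) a b (H i))
    (hy : ∀ τ ∈ Icc a b, Tendsto (fun i ↦ ∫ s in a..τ, H i s) l (𝓝 (y τ)))
    {y' : E} (hy' : HasDerivWithinAt y y' (Ioi u) u) : y' ∈ F (z u) := by
  rw [← hclosed.closure_eq, Metric.closure_eq_iInter_cthickening]
  refine mem_iInter₂.2 fun η hη ↦ ?_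
  have hnear : ∀ᶠ p in l ×ˢ 𝓝[Icc a b] u, F (Z p.1 p.2) ⊆ cthickening η (F (z u)) :=
    (tendsto_prod_of_tendstoUniformlyOn hZ hz).eventually <|
      (upperHemicontinuousAt_iff_forall_isOpen.1 hF _ isOpen_thickening
        (self_subset_thickening hη _)).mono
        fun _ hx ↦ hx.trans (thickening_subset_cthickening _ _)
  obtain ⟨P, hP, Q, hQ, hPQ⟩ := eventually_prod_iff.1 hnear
  have hIcc : Icc a b ∈ 𝓝[>] u :=
    mem_of_superset (Ioc_mem_nhdsGT hu.2) fun _ hs ↦ ⟨hu.1.trans hs.1.le, hs.2⟩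
  have hQright : ∀ᶠ s in 𝓝[>] u, Q s := hQ.filter_mono (nhdsWithin_le_of_mem hIcc)
  obtain ⟨c, hc, hQc⟩ := mem_nhdsGT_iff_exists_Ioc_subset.1 hQright
  refine isClosed_cthickening.mem_of_tendsto
    ((hasDerivWithinAt_iff_tendsto_slope' self_notMem_Ioi).1 hy') ?_
  filter_upwards [Ioc_mem_nhdsGT hc, Ioc_mem_nhdsGT hu.2] with v hvc hvb
  have huI : u ∈ Icc a b := Ico_subset_Icc_self hu
  have hvI : v ∈ Icc a b := ⟨hu.1.trans hvb.1.le, hvb.2⟩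
  have hlim := tendsto_integral_sub_of_tendsto_integral
    (hH.mono fun _ hi ↦ hi.intervalIntegrable) hy huI hvI
  rw [slope_def_module]
  refine isClosed_cthickening.mem_of_tendsto (hlim.const_smul (v - u)⁻¹) ?_
  filter_upwards [hH, hP] with i hi hPi
  refine inv_smul_integral_mem_of_convex (hconv.cthickening η) isClosed_cthickening hvc.1
    (hi.intervalIntegrable.mono_set (uIcc_subset_uIcc (Icc_subset_uIcc huI) (Icc_subset_uIcc hvI)))
    fun s hs ↦ ?_
  exact hPQ hPi (hQc ⟨hs.1, hs.2.trans hvc.2⟩) (hi.mem s ⟨hu.1.trans hs.1.le, hs.2.trans hvb.2⟩)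

variable [FiniteDimensional ℝ E]

lemma exists_isIntegrableSelectionOn_of_tendsto_integral [l.NeBot] (hab : a ≤ b)
    (hF : UpperHemicontinuous F) (hne : ∀ x, (F x).Nonempty) (hcompact : ∀ x, IsCompact (F x))
    (hconv : ∀ x, Convex ℝ (F x)) (hz : ContinuousOn z (Icc a b))
    (hZ : TendstoUniformlyOn Z z l (Icc a b))
    (hH : ∀ᶠ i in l, IsIntegrableSelectionOn (fun t ↦ F (Z i t)) a b (H i))
    (hy : ∀ τ ∈ Icc a b, Tendsto (fun i ↦ ∫ s in a..τ, H i s) l (𝓝 (y τ))) :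
    ∃ h, IsIntegrableSelectionOn (fun t ↦ F (z t)) a b h ∧
      ∀ τ ∈ Icc a b, y τ = ∫ s in a..τ, h s := by
  have := FiniteDimensional.complete ℝ E
  obtain ⟨R, hR⟩ := exists_eventually_forall_norm_le hF (fun x ↦ (hcompact x).isBounded) hZ hz
    isCompact_Icc
  have hHR : ∀ᶠ i in l, ∀ u ∈ Icc a b, ‖H i u‖ ≤ R.toNNReal := by
    filter_upwards [hH, hR] with i hi hRi u hu
    exact (hRi u hu _ (hi.mem u hu)).trans R.le_coe_toNNReal
  obtain ⟨g, hg, hyg⟩ := (lipschitzOnWith_of_tendsto_integral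
    (hH.mono fun _ hi ↦ hi.intervalIntegrable) hHR hy).extend_finite_dimension
  have hderiv : ∀ᵐ u ∂volume.restrict (uIoc a b), deriv g u ∈ F (z u) := by
    rw [uIoc_of_le hab, ← Measure.restrict_congr_set Ico_ae_eq_Ioc]
    filter_upwards [ae_restrict_mem measurableSet_Ico,
      ae_restrict_of_ae hg.ae_differentiableAt_real] with u hu hgu
    exact mem_of_hasDerivWithinAt_of_tendsto_integral hu (hF _) (hcompact _).isClosed (hconv _)
      (hz u (Ico_subset_Icc_self hu)) hZ hH (fun τ hτ ↦ hyg hτ ▸ hy τ hτ)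
      hgu.hasDerivAt.hasDerivWithinAt
  obtain ⟨h, hsel, hgh⟩ := exists_isIntegrableSelectionOn_of_ae_mem (fun u _ ↦ hne (z u))
    (intervalIntegrable_deriv_of_lipschitzWith hg a b) hderiv
  refine ⟨h, hsel, fun τ hτ ↦ ?_⟩
  have ha : a ∈ Icc a b := left_mem_Icc.2 hab
  have hya : y a = 0 := tendsto_nhds_unique (hy a ha) (by simp)
  calc y τ = g τ - g a := by rw [← hyg hτ, ← hyg ha, hya, sub_zero]
    _ = ∫ s in a..τ, deriv g s := (integral_deriv_eq_sub_of_lipschitzWith hg a τ).symm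
    _ = ∫ s in a..τ, h s := intervalIntegral.integral_congr_ae_restrict <|
      ae_restrict_of_ae_restrict_of_subset
        (uIoc_subset_uIoc_of_uIcc_subset_uIcc (uIcc_subset_uIcc_left (Icc_subset_uIcc hτ))) hgh

lemma exists_tendsto_integral_of_forall_norm_le (l : Ultrafilter ι) {R : ℝ}
    (hR : ∀ᶠ i in l, ∀ u ∈ Icc a b, ‖H i u‖ ≤ R) {τ : ℝ} (hτ : τ ∈ Icc a b) :
    ∃ w, Tendsto (fun i ↦ ∫ u in a..τ, H i u) l (𝓝 w) := by
  have := FiniteDimensional.proper ℝ E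
  have hball : ∀ᶠ i in l, ∫ u in a..τ, H i u ∈ closedBall (0 : E) (R * |τ - a|) := by
    filter_upwards [hR] with i hi
    refine mem_closedBall_zero_iff.2
      (intervalIntegral.norm_integral_le_of_norm_le_const fun u hu ↦ hi u ?_)
    rw [uIoc_of_le hτ.1] at hu
    exact ⟨hu.1.le, hu.2.trans hτ.2⟩
  obtain ⟨w, -, hw⟩ := (isCompact_closedBall (0 : E) (R * |τ - a|)).ultrafilter_le_nhds'
    (l.map fun i ↦ ∫ u in a..τ, H i u) (Ultrafilter.mem_map.2 hball)
  exact ⟨w, hw⟩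

lemma exists_isIntegrableSelectionOn (hab : a ≤ b)
    (hF : UpperHemicontinuous F) (hne : ∀ x, (F x).Nonempty) (hcompact : ∀ x, IsCompact (F x))
    (hconv : ∀ x, Convex ℝ (F x)) (hz : Continuous z) :
    ∃ h, IsIntegrableSelectionOn (fun t ↦ F (z t)) a b h := by
  choose σ hσ using hne
  let φ : ℕ → ℝ → ℝ := fun n u ↦ (⌊((n : ℝ) + 1) * u⌋ : ℝ) / ((n : ℝ) + 1)
  have hmeas (n : ℕ) : StronglyMeasurable fun u ↦ σ (z (φ n u)) :=
    (StronglyMeasurable.of_discrete (f := fun k : ℤ ↦ σ (z ((k : ℝ) / ((n : ℝ) + 1))))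
      ).comp_measurable (Int.measurable_floor.comp (measurable_const_mul _))
  have hZ : TendstoUniformlyOn (fun n ↦ z ∘ φ n) z (hyperfilter ℕ) (Icc a b) := fun V hV ↦
    Nat.hyperfilter_le_atTop
      (tendstoUniformlyOn_comp_of_isCompact hz tendstoUniformly_floor_mul_div isCompact_Icc V hV)
  obtain ⟨R, hR⟩ := exists_eventually_forall_norm_le hF (fun x ↦ (hcompact x).isBounded) hZ
    hz.continuousOn isCompact_Icc
  have hbound : ∀ᶠ n in (hyperfilter ℕ : Filter ℕ), ∀ u ∈ Icc a b, ‖σ (z (φ n u))‖ ≤ R := by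
    filter_upwards [hR] with n hn u hu
    exact hn u hu _ (hσ _)
  have hsel : ∀ᶠ n in (hyperfilter ℕ : Filter ℕ),
      IsIntegrableSelectionOn (fun t ↦ F (z (φ n t))) a b fun u ↦ σ (z (φ n u)) := by
    filter_upwards [hbound] with n hn
    refine ⟨intervalIntegrable_of_forall_norm_le (hmeas n).aestronglyMeasurable fun u hu ↦ hn u ?_,
      fun u _ ↦ hσ _⟩
    exact uIcc_of_le hab ▸ uIoc_subset_uIcc hu
  choose! y hy using fun τ (hτ : τ ∈ Icc a b) ↦
    exists_tendsto_integral_of_forall_norm_le (hyperfilter ℕ) hbound hτ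
  obtain ⟨h, hh, -⟩ := exists_isIntegrableSelectionOn_of_tendsto_integral hab hF
    (fun x ↦ ⟨σ x, hσ x⟩) hcompact hconv hz.continuousOn hZ hsel hy
  exact ⟨h, hh⟩

end Selection

section SelectionPrimitives

variable {E : Type*} [NormedAddCommGroup E] [NormedSpace ℝ E] {F : E → Set E} {a b : ℝ}

/-- The operator `Λ` on `C([a, b], E)` attached to a set-valued map `F`: the paths starting at
`z a` whose velocity is an integrable selection of `F` along `z`. The path `z` is extended to `ℝ`
by its end values so that selections are functions on `ℝ`. -/
def selectionPrimitives (F : E → Set E) (hab : a ≤ b) (z : C(Icc a b, E)) : Set C(Icc a b, E) :=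
  {y | ∃ h, IsIntegrableSelectionOn (fun u ↦ F (IccExtend hab z u)) a b h ∧
    ∀ τ : Icc a b, y τ = z ⟨a, left_mem_Icc.2 hab⟩ + ∫ u in a..τ, h u}

lemma LambdaD_zero {m : ℕ} (F : Euc m → Set (Euc m)) {T : ℝ} (hT : 0 ≤ T) :
    LambdaD F T hT 0 = selectionPrimitives F hT := by
  ext z y
  constructor
  · rintro ⟨h, hint, hmem, hy⟩
    refine ⟨h, ⟨hint, fun u hu ↦ ?_⟩, hy⟩
    simpa only [Fdelta, if_pos, IccExtend_of_mem hT _ hu] using hmem ⟨u, hu⟩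
  · rintro ⟨h, hsel, hy⟩
    refine ⟨h, hsel.intervalIntegrable, fun u ↦ ?_, hy⟩
    simpa only [Fdelta, if_pos, IccExtend_val] using hsel.mem u u.2

variable [FiniteDimensional ℝ E]

lemma selectionPrimitives_nonempty (hF : UpperHemicontinuous F) (hne : ∀ x, (F x).Nonempty)
    (hcompact : ∀ x, IsCompact (F x)) (hconv : ∀ x, Convex ℝ (F x)) (hab : a ≤ b)
    (z : C(Icc a b, E)) : (selectionPrimitives F hab z).Nonempty := by
  obtain ⟨h, hh⟩ := exists_isIntegrableSelectionOn hab hF hne hcompact hconv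
    (z.continuous.Icc_extend' (h := hab))
  have hcont : ContinuousOn (fun τ ↦ ∫ u in a..τ, h u) (Icc a b) :=
    uIcc_of_le hab ▸
      intervalIntegral.continuousOn_primitive_interval' hh.intervalIntegrable left_mem_uIcc
  exact ⟨⟨fun τ ↦ z ⟨a, left_mem_Icc.2 hab⟩ + ∫ u in a..τ, h u,
    continuous_const.add hcont.domRestrict⟩, h, hh, fun _ ↦ rfl⟩

lemma isClosed_graph_selectionPrimitives (hF : UpperHemicontinuous F)
    (hne : ∀ x, (F x).Nonempty) (hcompact : ∀ x, IsCompact (F x)) (hconv : ∀ x, Convex ℝ (F x))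
    (hab : a ≤ b) :
    IsClosed {p : C(Icc a b, E) × C(Icc a b, E) | p.2 ∈ selectionPrimitives F hab p.1} := by
  refine IsSeqClosed.isClosed fun p ⟨z, y⟩ hp hlim ↦ ?_
  obtain ⟨hz, hy⟩ := (Prod.tendsto_iff _ _).1 hlim
  choose H hsel hHy using hp
  have hZ : TendstoUniformlyOn (fun n ↦ IccExtend hab (p n).1) (IccExtend hab z) atTop
      (Icc a b) :=
    ((ContinuousMap.tendsto_iff_tendstoUniformly.1 hz).comp (projIcc a b hab)).tendstoUniformlyOn
  have hint : ∀ τ ∈ Icc a b, Tendsto (fun n ↦ ∫ u in a..τ, H n u) atTop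
      (𝓝 (IccExtend hab y τ - z ⟨a, left_mem_Icc.2 hab⟩)) := fun τ hτ ↦ by
    rw [IccExtend_of_mem hab _ hτ]
    refine (((continuous_eval_const _).tendsto y).comp hy |>.sub
      (((continuous_eval_const _).tendsto z).comp hz)).congr fun n ↦ ?_
    exact sub_eq_of_eq_add' (hHy n ⟨τ, hτ⟩)
  obtain ⟨h, hh, hhy⟩ := exists_isIntegrableSelectionOn_of_tendsto_integral hab hF hne hcompact
    hconv (z.continuous.Icc_extend' (h := hab)).continuousOn hZ (.of_forall hsel) hint
  refine ⟨h, hh, fun τ ↦ ?_⟩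
  rw [← hhy τ τ.2, IccExtend_val, add_sub_cancel]

theorem Lambda_nonempty_and_closed_general (hF : UpperHemicontinuous F)
    (hne : ∀ x, (F x).Nonempty) (hcompact : ∀ x, IsCompact (F x)) (hconv : ∀ x, Convex ℝ (F x))
    (hab : a ≤ b) :
    (∀ z : C(Icc a b, E), (selectionPrimitives F hab z).Nonempty) ∧
      IsClosed {p : C(Icc a b, E) × C(Icc a b, E) | p.2 ∈ selectionPrimitives F hab p.1} :=
  ⟨selectionPrimitives_nonempty hF hne hcompact hconv hab,
    isClosed_graph_selectionPrimitives hF hne hcompact hconv hab⟩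

end SelectionPrimitives

/-- For a bounded standard `F`, the operator `Λ = Λ^0` on
`C([0,T], ℝ^m)` has nonempty images and closed graph: if `z_n → z` and `y_n → y`
uniformly with `y_n ∈ Λ(z_n)`, then `y ∈ Λ(z)`. -/
theorem Lambda_nonempty_and_closed
    {m : ℕ} (F : Euc m → Set (Euc m)) (hF : IsStandardSVM F)
    (hFbdd : ∃ B : ℝ, ∀ x, ∀ y ∈ F x, ‖y‖ ≤ B)
    (T : ℝ) (hT : 0 < T) :
    (∀ z : C(Icc (0:ℝ) T, Euc m), (LambdaD F T hT.le 0 z).Nonempty) ∧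
    (∀ (zn yn : ℕ → C(Icc (0:ℝ) T, Euc m)) (z y : C(Icc (0:ℝ) T, Euc m)),
      Tendsto zn atTop (𝓝 z) → Tendsto yn atTop (𝓝 y) →
      (∀ n, yn n ∈ LambdaD F T hT.le 0 (zn n)) →
      y ∈ LambdaD F T hT.le 0 z) := by
  obtain ⟨hnonempty, hclosed⟩ := Lambda_nonempty_and_closed_general hF.upperHemicontinuous
    (fun x ↦ (hF.1 x).1) (fun x ↦ (hF.1 x).2.1) (fun x ↦ (hF.1 x).2.2) hT.le
  simp only [LambdaD_zero]
  exact ⟨hnonempty, fun zn yn z y hz hy hmem ↦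
    hclosed.mem_of_tendsto (hz.prodMk_nhds hy) (.of_forall hmem)⟩
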